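/- arXiv:2510.11937 — 2 statements merged into one kernel-verified Lean document; each statement's English description precedes it below -/
import Mathlib

section
/- Let E and P be finite index sets, let A be a real E×P matrix, let λ > 0, and suppose there is μ > 0 such that zᵀ(AᵀA)z ≥ μ‖z‖₂² for all z ∈ ℝ^P. Let K ⊆ ℝ^P be a convex set, let c₁, c₂ ∈ ℝ^P, and suppose x₁ minimizes x ↦ ⟨c₁, x⟩ + λ‖Ax‖₂² over K and x₂ minimizes x ↦ ⟨c₂, x⟩ + λ‖Ax‖₂² over K. Then ‖x₁ − x₂‖₂ ≤ ‖c₁ − c₂‖₂ / (2λμ). -/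
open Matrix

/-- A real number that dominates `(1 - t) * r` for every `t ∈ (0, 1]` dominates `r`. -/
lemma le_of_forall_one_sub_mul_le {r d : ℝ} (h : ∀ t : ℝ, 0 < t → t ≤ 1 → (1 - t) * r ≤ d) :
    r ≤ d := by
  by_contra! hdr
  have hd : 0 ≤ d := by simpa using h 1 one_pos le_rfl
  have hr : 0 < r := hd.trans_lt hdr
  have key := h ((r - d) / (2 * r)) (div_pos (sub_pos.2 hdr) (by positivity))
    ((div_le_one (by positivity)).2 (by linarith))
  have heq : (1 - (r - d) / (2 * r)) * r = (r + d) / 2 := by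
    field_simp
    ring
  linarith

/-- Quadratic growth of `x ↦ ⟨c, x⟩ + lam * ‖A x‖²` away from a minimizer over a convex set. -/
lemma quadratic_growth_of_minimizer {E P : Type*} [Fintype E] [Fintype P]
    (A : Matrix E P ℝ) (lam : ℝ) {K : Set (P → ℝ)} (hK : Convex ℝ K) {c x y : P → ℝ}
    (hxK : x ∈ K) (hyK : y ∈ K)
    (hx : ∀ y ∈ K, (∑ p, c p * x p) + lam * ∑ e, (A.mulVec x e) ^ 2
        ≤ (∑ p, c p * y p) + lam * ∑ e, (A.mulVec y e) ^ 2) :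
    (∑ p, c p * x p) + lam * ∑ e, (A.mulVec x e) ^ 2
        + lam * ∑ e, (A.mulVec x e - A.mulVec y e) ^ 2
      ≤ (∑ p, c p * y p) + lam * ∑ e, (A.mulVec y e) ^ 2 := by
  rw [← le_sub_iff_add_le']
  refine le_of_forall_one_sub_mul_le fun t ht ht1 => ?_
  have hmin := hx ((1 - t) • x + t • y) (hK hxK hyK (sub_nonneg.2 ht1) ht.le (by ring))
  have hlin : ∑ p, c p * ((1 - t) • x + t • y) p
      = (1 - t) * ∑ p, c p * x p + t * ∑ p, c p * y p := by
    simp only [Finset.mul_sum, ← Finset.sum_add_distrib, Pi.add_apply, Pi.smul_apply, smul_eq_mul]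
    exact Finset.sum_congr rfl fun p _ => by ring
  have hquad : ∑ e, (A.mulVec ((1 - t) • x + t • y) e) ^ 2
      = (1 - t) * ∑ e, (A.mulVec x e) ^ 2 + t * ∑ e, (A.mulVec y e) ^ 2
        - t * (1 - t) * ∑ e, (A.mulVec x e - A.mulVec y e) ^ 2 := by
    simp only [Finset.mul_sum, ← Finset.sum_add_distrib, ← Finset.sum_sub_distrib, mulVec_add,
      mulVec_smul, Pi.add_apply, Pi.smul_apply, smul_eq_mul]
    exact Finset.sum_congr rfl fun e _ => by ring
  rw [hlin, hquad] at hmin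
  refine le_of_mul_le_mul_left ?_ ht
  linarith

/-- Lipschitz sensitivity of the regularized optimum with respect to the linear term:
if `AᵀA ⪰ μ·I` with `μ > 0`, and `x₁`, `x₂` minimize `⟨c₁, x⟩ + λ‖Ax‖₂²` and
`⟨c₂, x⟩ + λ‖Ax‖₂²` over a convex set `K`, then `‖x₁ − x₂‖₂ ≤ ‖c₁ − c₂‖₂ / (2λμ)`. -/
theorem lipschitz_sensitivity_of_minimizers {E P : Type*} [Fintype E] [Fintype P]
    (A : Matrix E P ℝ) (lam : ℝ) (hlam : 0 < lam)
    (μ : ℝ) (hμ : 0 < μ)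
    (hA : ∀ z : P → ℝ, μ * ∑ p, (z p) ^ 2 ≤ z ⬝ᵥ ((Aᵀ * A).mulVec z))
    (K : Set (P → ℝ)) (hK : Convex ℝ K)
    (c₁ c₂ x₁ x₂ : P → ℝ)
    (hx₁K : x₁ ∈ K)
    (hx₁ : ∀ y ∈ K, (∑ p, c₁ p * x₁ p) + lam * ∑ e, (A.mulVec x₁ e) ^ 2
        ≤ (∑ p, c₁ p * y p) + lam * ∑ e, (A.mulVec y e) ^ 2)
    (hx₂K : x₂ ∈ K)
    (hx₂ : ∀ y ∈ K, (∑ p, c₂ p * x₂ p) + lam * ∑ e, (A.mulVec x₂ e) ^ 2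
        ≤ (∑ p, c₂ p * y p) + lam * ∑ e, (A.mulVec y e) ^ 2) :
    Real.sqrt (∑ p, (x₁ p - x₂ p) ^ 2)
      ≤ Real.sqrt (∑ p, (c₁ p - c₂ p) ^ 2) / (2 * lam * μ) := by
  have hgrow₁ := quadratic_growth_of_minimizer A lam hK hx₁K hx₂K hx₁
  have hgrow₂ := quadratic_growth_of_minimizer A lam hK hx₂K hx₁K hx₂
  have hsymm : ∑ e, (A.mulVec x₂ e - A.mulVec x₁ e) ^ 2
      = ∑ e, (A.mulVec x₁ e - A.mulVec x₂ e) ^ 2 :=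
    Finset.sum_congr rfl fun e _ => by ring
  have hcoer : μ * ∑ p, (x₁ p - x₂ p) ^ 2 ≤ ∑ e, (A.mulVec x₁ e - A.mulVec x₂ e) ^ 2 := by
    refine (hA (x₁ - x₂)).trans_eq ?_
    rw [← mulVec_mulVec, dotProduct_mulVec, vecMul_transpose, mulVec_sub]
    simp only [dotProduct, Pi.sub_apply, sq]
  have hinner : ∑ p, (c₂ p - c₁ p) * (x₁ p - x₂ p)
      = (∑ p, c₂ p * x₁ p) - (∑ p, c₂ p * x₂ p)
        - ((∑ p, c₁ p * x₁ p) - ∑ p, c₁ p * x₂ p) := by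
    simp only [← Finset.sum_sub_distrib]
    exact Finset.sum_congr rfl fun p _ => by ring
  have hcs := Real.sum_mul_le_sqrt_mul_sqrt Finset.univ (fun p => c₂ p - c₁ p)
    (fun p => x₁ p - x₂ p)
  have hcsymm : ∑ p, (c₂ p - c₁ p) ^ 2 = ∑ p, (c₁ p - c₂ p) ^ 2 :=
    Finset.sum_congr rfl fun p _ => by ring
  rw [hcsymm, hinner] at hcs
  rw [hsymm] at hgrow₂
  have hsq := Real.sq_sqrt (Finset.sum_nonneg fun p (_ : p ∈ Finset.univ) =>
    sq_nonneg (x₁ p - x₂ p))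
  have hlamcoer := mul_le_mul_of_nonneg_left hcoer hlam.le
  rw [← hsq] at hlamcoer
  rw [le_div_iff₀ (by positivity)]
  rcases (Real.sqrt_nonneg (∑ p, (x₁ p - x₂ p) ^ 2)).eq_or_lt with hzero | hpos
  · rw [← hzero, zero_mul]
    exact Real.sqrt_nonneg _
  · refine le_of_mul_le_mul_right ?_ hpos
    linarith
end

section
/- Let P (paths), E (links), S (slices), and F (flows) be finite sets. Let flowOf : P → F assign each path to its flow, let I : P × E → {0,1} indicate whether path p uses link e, let c : E → ℝ be link capacities, and let τ : F → S assign each flow to the slice of its source node, so that the slice of a path p is σ(p) = τ(flowOf(p)). For each slice j ∈ S let x_j : P → ℝ≥0 be a nonnegative flow allocation and d_j : F → ℝ the demands predicted by slice j, satisfying for every j ∈ S and i ∈ F: Σ_{p : flowOf(p)=i} x_j(p) ≤ d_j(i). Let M : F → ℝ satisfy d_j(i) ≤ M(i) for all j ∈ S and i ∈ F. Fix β > 0 and a link e₀ that is β-constrained: Σ_{i ∈ F : ∃p, flowOf(p)=i and I(p,e₀)=1} M(i) ≤ β·c(e₀). Then the realized load on e₀ under source routing, Σ_{p : I(p,e₀)=1}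 x_{σ(p)}(p), is at most β·c(e₀). -/
/-- The realized load on a β-constrained link never exceeds β times its capacity,
provided each slice's allocation per flow is bounded by that slice's predicted demand,
which in turn is bounded by the maximum past demand. -/
theorem beta_constrained_link_load_bound {P E S F : Type*}
    [Fintype P] [Fintype E] [Fintype S] [Fintype F] [DecidableEq F]
    (flowOf : P → F) (I : P → E → Bool) (c : E → ℝ) (τ : F → S)
    (x : S → P → ℝ) (d : S → F → ℝ) (M : F → ℝ)
    (hx : ∀ j p, 0 ≤ x j p)
    (hd : ∀ j : S, ∀ i : F, ∑ p ∈ Finset.univ.filter (fun p => flowOf p = i), x j p ≤ d j i)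
    (hM : ∀ j i, d j i ≤ M i)
    (β : ℝ) (hβ : 0 < β) (e₀ : E)
    (hcon : ∑ i ∈ Finset.univ.filter (fun i => ∃ p, flowOf p = i ∧ I p e₀), M i
        ≤ β * c e₀) :
    ∑ p ∈ Finset.univ.filter (fun p => I p e₀), x (τ (flowOf p)) p ≤ β * c e₀ := by
  refine le_trans ?_ hcon
  rw [← Finset.sum_fiberwise_of_maps_to (g := flowOf)
    (t := Finset.univ.filter (fun i => ∃ p, flowOf p = i ∧ I p e₀))
    (fun p hp => by simpa using ⟨p, rfl, (Finset.mem_filter.mp hp).2⟩)]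
  refine Finset.sum_le_sum fun i _ => ?_
  calc ∑ p ∈ (Finset.univ.filter (fun p => I p e₀)).filter (fun p => flowOf p = i),
        x (τ (flowOf p)) p
      = ∑ p ∈ (Finset.univ.filter (fun p => I p e₀)).filter (fun p => flowOf p = i),
        x (τ i) p :=
        Finset.sum_congr rfl fun p hp => by rw [(Finset.mem_filter.mp hp).2]
    _ ≤ ∑ p ∈ Finset.univ.filter (fun p => flowOf p = i), x (τ i) p :=
        Finset.sum_le_sum_of_subset_of_nonneg
          (Finset.filter_subset_filter _ (Finset.filter_subset _ _)) fun p _ _ => hx _ p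
    _ ≤ d (τ i) i := hd _ i
    _ ≤ M i := hM _ i
end
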